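/- Let 1 ≤ p < ∞ and let u : M_N → M_N be a completely positive linear map such that ‖u(x)‖_{S_p} ≤ C ‖x‖_{S_p} for all x ∈ M_N. Then for every n ≥ 1 and every x ∈ M_N ⊗ M_n one has ‖(u ⊗ id_{M_n})(x)‖_{S_p^N[M_n]} ≤ C ‖x‖_{S_p^N[M_n]}; equivalently, the regular norm satisfies ‖u‖_r ≤ C. (Matrix-algebra case of the first part of Lemma 2.3, to which the paper reduces by density.) -/

import Mathlib

open scoped Kronecker ENNReal Classical ComplexOrder
open Matrix

noncomputable section

/-- The operator norm (`S_∞` norm) of a complex matrix, acting on Euclidean space. -/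
def opNorm {ι : Type} [Fintype ι] [DecidableEq ι] (a : Matrix ι ι ℂ) : ℝ :=
  ‖LinearMap.toContinuousLinearMap (Matrix.toEuclideanLin a)‖

/-- The Schatten `p`-norm of a complex matrix: the `ℓ^p` norm of its singular values
(the square roots of the eigenvalues of `aᴴ * a`); for `p = ∞` it is the operator norm. -/
def schattenNorm {ι : Type} [Fintype ι] [DecidableEq ι] (p : ℝ≥0∞) (a : Matrix ι ι ℂ) : ℝ :=
  if p = ∞ then opNorm a
  else (∑ i, Real.sqrt ((Matrix.posSemidef_conjTranspose_mul_self a).isHermitian.eigenvalues i) ^ p.toReal)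
      ^ (1 / p.toReal)

/-- Pisier's vector-valued Schatten norm `‖x‖_{S_p^N[M_n]}` on `M_N ⊗ M_n`:
the infimum of `‖a‖_{S_{2p}} ‖y‖_{S_∞} ‖b‖_{S_{2p}}` over factorizations
`x = (a ⊗ 1) · y · (b ⊗ 1)`. -/
def pisierNorm (p : ℝ≥0∞) {N n : ℕ} (x : Matrix (Fin N × Fin n) (Fin N × Fin n) ℂ) : ℝ :=
  sInf { r | ∃ (a b : Matrix (Fin N) (Fin N) ℂ)
      (y : Matrix (Fin N × Fin n) (Fin N × Fin n) ℂ),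
      x = (a ⊗ₖ (1 : Matrix (Fin n) (Fin n) ℂ)) * y * (b ⊗ₖ (1 : Matrix (Fin n) (Fin n) ℂ)) ∧
      r = schattenNorm (2 * p) a * opNorm y * schattenNorm (2 * p) b }

/-- The amplification `u ⊗ id_{M_n} : M_N ⊗ M_n → M_m ⊗ M_n` of a map `u : M_N → M_m`,
acting as `u` on each `M_n`-block entry. -/
def amp {N m n : ℕ} (u : Matrix (Fin N) (Fin N) ℂ → Matrix (Fin m) (Fin m) ℂ)
    (x : Matrix (Fin N × Fin n) (Fin N × Fin n) ℂ) : Matrix (Fin m × Fin n) (Fin m × Fin n) ℂ :=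
  Matrix.of fun ik jl => u (Matrix.of fun i j => x (i, ik.2) (j, jl.2)) ik.1 jl.1

/-- The amplification `id_{M_n} ⊗ u : M_n ⊗ M_N → M_n ⊗ M_m` of a map `u : M_N → M_m`. -/
def ampLeft {n N m : ℕ} (u : Matrix (Fin N) (Fin N) ℂ → Matrix (Fin m) (Fin m) ℂ)
    (x : Matrix (Fin n × Fin N) (Fin n × Fin N) ℂ) : Matrix (Fin n × Fin m) (Fin n × Fin m) ℂ :=
  Matrix.of fun ki lj => u (Matrix.of fun i j => x (ki.1, i) (lj.1, j)) ki.2 lj.2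

/-- The trace pairing `T : M_k ⊗ M_k → ℂ`, with `T(a ⊗ b) = tr(ᵗa·b)`; writing
`z` as a `k×k` matrix of blocks `z_{ij} ∈ M_k`, `T(z) = Σ_{i,j} (z_{ij})_{ij}`. -/
def tracePair {k : ℕ} (z : Matrix (Fin k × Fin k) (Fin k × Fin k) ℂ) : ℂ :=
  ∑ i : Fin k, ∑ j : Fin k, z (i, i) (j, j)

/-- A map `u : M_N → M_m` is completely positive if all its amplifications
`id_{M_n} ⊗ u` preserve positive semidefiniteness. -/
def CompletelyPositive {N m : ℕ}
    (u : Matrix (Fin N) (Fin N) ℂ → Matrix (Fin m) (Fin m) ℂ) : Prop :=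
  ∀ (n : ℕ) (x : Matrix (Fin n × Fin N) (Fin n × Fin N) ℂ),
    x.PosSemidef → (ampLeft u x).PosSemidef

/-- The regular norm (relative to `p`) of `u : M_N → M_m`: the supremum in `[0,∞]`
over `n ≥ 1` of the norms of the amplifications `u ⊗ id_{M_n}` from
`(M_N ⊗ M_n, ‖·‖_{S_p^N[M_n]})` to `(M_m ⊗ M_n, ‖·‖_{S_p^m[M_n]})`. -/
def regNorm (p : ℝ≥0∞) {N m : ℕ}
    (u : Matrix (Fin N) (Fin N) ℂ → Matrix (Fin m) (Fin m) ℂ) : ℝ≥0∞ :=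
  ⨆ (n : ℕ) (x : Matrix (Fin N × Fin (n + 1)) (Fin N × Fin (n + 1)) ℂ)
    (_ : pisierNorm p x ≤ 1), ENNReal.ofReal (pisierNorm p (amp u x))

/-- Pisier's norm `ρ_p` on `M_n ⊗ M_m` (with `q` the conjugate exponent `p'`):
the infimum of `‖γ‖_{S_{2p}} ‖α‖_{S_{2p'}} ‖g‖_{S_∞} ‖δ‖_{S_{2p}} ‖β‖_{S_{2p'}}`
over factorizations `a = (γ ⊗ α) · g · (δ ⊗ β)`. -/
def rho (p q : ℝ≥0∞) {n m : ℕ} (a : Matrix (Fin n × Fin m) (Fin n × Fin m) ℂ) : ℝ :=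
  sInf { r | ∃ (γ δ : Matrix (Fin n) (Fin n) ℂ) (α β : Matrix (Fin m) (Fin m) ℂ)
      (g : Matrix (Fin n × Fin m) (Fin n × Fin m) ℂ),
      a = (γ ⊗ₖ α) * g * (δ ⊗ₖ β) ∧
      r = schattenNorm (2 * p) γ * schattenNorm (2 * q) α * opNorm g *
          schattenNorm (2 * p) δ * schattenNorm (2 * q) β }

/-- The amplification `u ⊗ id_{M_n}` of a map `u` defined only on a subspace `S ⊆ M_N`,
applied to an element of `M_N ⊗ M_n` all of whose `M_N`-valued block entries lie in `S`. -/
def ampOn {N m n : ℕ} (S : Submodule ℂ (Matrix (Fin N) (Fin N) ℂ))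
    (u : S →ₗ[ℂ] Matrix (Fin m) (Fin m) ℂ)
    (x : Matrix (Fin N × Fin n) (Fin N × Fin n) ℂ)
    (h : ∀ k l : Fin n, (Matrix.of fun i j => x (i, k) (j, l)) ∈ S) :
    Matrix (Fin m × Fin n) (Fin m × Fin n) ℂ :=
  Matrix.of fun ik jl => u ⟨Matrix.of fun i j => x (i, ik.2) (j, jl.2), h ik.2 jl.2⟩ ik.1 jl.1

end

/-!
A factorization `x = (a ⊗ 1) y (b ⊗ 1)` with `‖y‖ ≤ 1` says exactly that the `2 × 2` block matrix
with diagonal `aaᴴ ⊗ 1`, `bᴴb ⊗ 1` and off-diagonal entry `x` is positive. A completely positive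
`u` preserves this positivity, so `(u ⊗ id)(x)` factors through square roots of `u(aaᴴ)` and
`u(bᴴb)` with a contraction in the middle, and `‖s‖_{2p}² = ‖sᴴs‖_p` converts the bound of `u` on
`S_p` into bounds on these square roots.
-/

section SchattenNorm

lemma map_eigenvalues_cfc {𝕜 ι : Type*} [RCLike 𝕜] [Fintype ι] [DecidableEq ι] {a : Matrix ι ι 𝕜}
    (ha : a.IsHermitian) (f : ℝ → ℝ) (hfa : (cfc f a).IsHermitian) :
    Finset.univ.val.map hfa.eigenvalues = Finset.univ.val.map (f ∘ ha.eigenvalues) := by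
  apply Multiset.map_injective (RCLike.ofReal_injective (K := 𝕜))
  rw [Multiset.map_map, ← hfa.roots_charpoly_eq_eigenvalues, ha.charpoly_cfc_eq,
    Polynomial.roots_prod _ _ (Finset.prod_ne_zero_iff.2 fun i _ => Polynomial.X_sub_C_ne_zero _)]
  simp only [Polynomial.roots_X_sub_C, Multiset.bind_singleton, Multiset.map_map,
    Function.comp_def]

lemma sum_eigenvalues_conjTranspose_mul_self {𝕜 ι : Type*} [RCLike 𝕜] [Fintype ι] [DecidableEq ι]
    {a : Matrix ι ι 𝕜} (ha : a.IsHermitian) {M : Type*} [AddCommMonoid M] (g : ℝ → M) :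
    ∑ i, g ((isHermitian_conjTranspose_mul_self a).eigenvalues i) =
      ∑ i, g (ha.eigenvalues i ^ 2) := by
  have hsq : aᴴ * a = cfc (fun r : ℝ => r ^ 2) a :=
    .trans (by rw [ha.eq, sq]) (cfc_pow_id (R := ℝ) a 2 ha).symm
  have hmap := map_eigenvalues_cfc ha _ (hsq ▸ isHermitian_conjTranspose_mul_self a)
  simp only [hsq]
  simpa only [Multiset.map_map, Function.comp_def, Finset.sum_map_val] using
    congrArg (fun s => (s.map g).sum) hmap

open scoped Matrix.Norms.L2Operator

variable {ι : Type} [Fintype ι] [DecidableEq ι]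

lemma opNorm_eq_norm (a : Matrix ι ι ℂ) : opNorm a = ‖a‖ := rfl

lemma schattenNorm_top (a : Matrix ι ι ℂ) : schattenNorm ∞ a = ‖a‖ := if_pos rfl

lemma schattenNorm_nonneg (p : ℝ≥0∞) (a : Matrix ι ι ℂ) : 0 ≤ schattenNorm p a := by
  unfold schattenNorm
  split_ifs
  · exact norm_nonneg _
  · positivity

lemma schattenNorm_eq_zero {p : ℝ≥0∞} (hp : p ≠ 0) {a : Matrix ι ι ℂ} :
    schattenNorm p a = 0 ↔ a = 0 := by
  rcases eq_or_ne p ∞ with rfl | hp_top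
  · rw [schattenNorm_top, norm_eq_zero]
  have hpos := posSemidef_conjTranspose_mul_self a
  have hp_real : p.toReal ≠ 0 := ENNReal.toReal_ne_zero.2 ⟨hp, hp_top⟩
  have hterm (i : ι) : 0 ≤ √(hpos.isHermitian.eigenvalues i) ^ p.toReal := by positivity
  rw [schattenNorm, if_neg hp_top,
    Real.rpow_eq_zero (Finset.sum_nonneg fun i _ => hterm i) (one_div_ne_zero hp_real),
    Finset.sum_eq_zero_iff_of_nonneg fun i _ => hterm i, ← conjTranspose_mul_self_eq_zero,
    ← hpos.isHermitian.eigenvalues_eq_zero_iff, funext_iff]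
  simp only [Finset.mem_univ, true_imp_iff, Real.rpow_eq_zero (Real.sqrt_nonneg _) hp_real,
    Real.sqrt_eq_zero (hpos.eigenvalues_nonneg _), Pi.zero_apply]

lemma schattenNorm_of_posSemidef {p : ℝ≥0∞} (hp : p ≠ ∞) {a : Matrix ι ι ℂ}
    (ha : a.PosSemidef) :
    schattenNorm p a = (∑ i, ha.isHermitian.eigenvalues i ^ p.toReal) ^ (1 / p.toReal) := by
  rw [schattenNorm, if_neg hp,
    sum_eigenvalues_conjTranspose_mul_self ha.isHermitian fun r => √r ^ p.toReal]
  simp only [Real.sqrt_sq (ha.eigenvalues_nonneg _)]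

lemma schattenNorm_conjTranspose (p : ℝ≥0∞) (a : Matrix ι ι ℂ) :
    schattenNorm p aᴴ = schattenNorm p a := by
  unfold schattenNorm
  split_ifs
  · exact l2_opNorm_conjTranspose a
  · rw [(IsHermitian.eigenvalues_eq_eigenvalues_iff _
      (posSemidef_conjTranspose_mul_self a).isHermitian).2]
    rw [conjTranspose_conjTranspose, charpoly_mul_comm]

lemma schattenNorm_conjTranspose_mul_self (p : ℝ≥0∞) (a : Matrix ι ι ℂ) :
    schattenNorm p (aᴴ * a) = schattenNorm (2 * p) a ^ 2 := by
  rcases eq_or_ne p ∞ with rfl | hp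
  · rw [ENNReal.mul_top two_ne_zero, schattenNorm_top, schattenNorm_top,
      l2_opNorm_conjTranspose_mul_self, sq]
  have hpos := posSemidef_conjTranspose_mul_self a
  have hterm (i : ι) : √(hpos.isHermitian.eigenvalues i) ^ (2 * p).toReal =
      hpos.isHermitian.eigenvalues i ^ p.toReal := by
    rw [ENNReal.toReal_mul, ENNReal.toReal_ofNat, Real.rpow_mul (Real.sqrt_nonneg _),
      Real.rpow_two, Real.sq_sqrt (hpos.eigenvalues_nonneg i)]
  rw [schattenNorm_of_posSemidef hp hpos, schattenNorm,
    if_neg (ENNReal.mul_ne_top ENNReal.ofNat_ne_top hp)]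
  simp only [hterm]
  rw [← Real.rpow_mul_natCast
    (Finset.sum_nonneg fun i _ => Real.rpow_nonneg (hpos.eigenvalues_nonneg i) _)]
  congr 1
  rw [ENNReal.toReal_mul, ENNReal.toReal_ofNat, Nat.cast_ofNat]
  ring

lemma schattenNorm_mul_conjTranspose_self (p : ℝ≥0∞) (a : Matrix ι ι ℂ) :
    schattenNorm p (a * aᴴ) = schattenNorm (2 * p) a ^ 2 := by
  simpa only [conjTranspose_conjTranspose, schattenNorm_conjTranspose] using
    schattenNorm_conjTranspose_mul_self p aᴴ

end SchattenNorm

section Factorization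

lemma exists_contraction_apply_eq {𝕜 E F G : Type*} [RCLike 𝕜] [AddCommGroup E] [Module 𝕜 E]
    [NormedAddCommGroup F] [NormedSpace 𝕜 F] [NormedAddCommGroup G] [InnerProductSpace 𝕜 G]
    (S : E →ₗ[𝕜] F) (T : E →ₗ[𝕜] G) [T.range.HasOrthogonalProjection]
    (h : ∀ v, ‖S v‖ ≤ ‖T v‖) : ∃ W : G →L[𝕜] F, ‖W‖ ≤ 1 ∧ ∀ v, W (T v) = S v := by
  obtain ⟨g, hg⟩ := T.rangeRestrict.exists_rightInverse_of_surjective T.range_rangeRestrict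
  have hTg (v : T.range) : T (g v) = v := congrArg Subtype.val (LinearMap.congr_fun hg v)
  -- `W` undoes `T` on its range and vanishes on the orthogonal complement.
  refine ⟨LinearMap.mkContinuous (S ∘ₗ g ∘ₗ T.range.orthogonalProjectionOnto.toLinearMap) 1
    fun v => ?_, LinearMap.mkContinuous_norm_le _ zero_le_one _, fun v => ?_⟩
  · calc ‖S (g (T.range.orthogonalProjectionOnto v))‖
        ≤ ‖T (g (T.range.orthogonalProjectionOnto v))‖ := h _
      _ = ‖T.range.orthogonalProjectionOnto v‖ := by rw [hTg, Submodule.coe_norm]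
      _ ≤ 1 * ‖v‖ := by
        rw [one_mul]
        exact Submodule.norm_orthogonalProjectionOnto_apply_le _ v
  · have hproj : T.range.orthogonalProjectionOnto (T v) = ⟨T v, v, rfl⟩ :=
      Submodule.orthogonalProjectionOnto_mem_subspace_eq_self (⟨T v, v, rfl⟩ : T.range)
    have hsub : ‖S (g ⟨T v, v, rfl⟩ - v)‖ ≤ 0 :=
      (h _).trans_eq (by rw [map_sub, hTg, sub_self, norm_zero])
    rw [map_sub, norm_le_zero_iff, sub_eq_zero] at hsub
    exact (congrArg (fun w => S (g w)) hproj).trans hsub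

open scoped Matrix.Norms.L2Operator MatrixOrder

variable {𝕜 κ l ι ι' : Type*} [RCLike 𝕜] [Fintype κ] [Fintype l]

lemma star_dotProduct_conjTranspose_mul_self_mulVec [Fintype ι] [DecidableEq ι]
    (s : Matrix κ ι 𝕜) (v : EuclideanSpace 𝕜 ι) :
    star v.ofLp ⬝ᵥ ((sᴴ * s) *ᵥ v.ofLp) = ((‖toEuclideanLin s v‖ ^ 2 : ℝ) : 𝕜) := by
  rw [RCLike.ofReal_pow, ← inner_self_eq_norm_sq_to_K (𝕜 := 𝕜),
    EuclideanSpace.inner_eq_star_dotProduct, ← mulVec_mulVec, dotProduct_mulVec, ← star_mulVec,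
    dotProduct_comm]
  rfl

lemma conjTranspose_mul_self_le_iff_norm_le [Fintype ι] [DecidableEq ι]
    {s : Matrix κ ι 𝕜} {t : Matrix l ι 𝕜} :
    sᴴ * s ≤ tᴴ * t ↔ ∀ v, ‖toEuclideanLin s v‖ ≤ ‖toEuclideanLin t v‖ := by
  rw [Matrix.le_iff, posSemidef_iff_dotProduct_mulVec, and_iff_right
    ((isHermitian_conjTranspose_mul_self t).sub (isHermitian_conjTranspose_mul_self s)),
    (WithLp.equiv 2 (ι → 𝕜)).symm.forall_congr_left]
  refine forall_congr' fun v => ?_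
  have hv : star v.ofLp ⬝ᵥ ((tᴴ * t - sᴴ * s) *ᵥ v.ofLp) =
      ((‖toEuclideanLin t v‖ ^ 2 - ‖toEuclideanLin s v‖ ^ 2 : ℝ) : 𝕜) := by
    rw [sub_mulVec, dotProduct_sub, star_dotProduct_conjTranspose_mul_self_mulVec,
      star_dotProduct_conjTranspose_mul_self_mulVec, RCLike.ofReal_sub]
  exact (hv ▸ RCLike.ofReal_nonneg).trans <|
    sub_nonneg.trans (sq_le_sq₀ (norm_nonneg _) (norm_nonneg _))

variable [DecidableEq l]

lemma conjTranspose_mul_self_le_iff_exists_contraction [Finite ι]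
    {s : Matrix κ ι 𝕜} {t : Matrix l ι 𝕜} :
    sᴴ * s ≤ tᴴ * t ↔ ∃ w : Matrix κ l 𝕜, ‖w‖ ≤ 1 ∧ s = w * t := by
  have := Fintype.ofFinite ι
  rw [conjTranspose_mul_self_le_iff_norm_le]
  constructor
  · intro h
    obtain ⟨W, hW, hWT⟩ := exists_contraction_apply_eq _ _ h
    refine ⟨toEuclideanLin.symm W, ?_, toEuclideanLin.injective (LinearMap.ext fun v => ?_)⟩
    · rwa [l2_opNorm_def, LinearEquiv.trans_apply, LinearEquiv.apply_symm_apply]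
    · rw [toLpLin_mul_same, LinearEquiv.apply_symm_apply]
      exact (hWT v).symm
  · rintro ⟨w, hw, rfl⟩ v
    rw [toLpLin_mul_same, LinearMap.comp_apply]
    calc ‖toEuclideanLin w (toEuclideanLin t v)‖ ≤ 1 * ‖toEuclideanLin t v‖ :=
          (LinearMap.toContinuousLinearMap (toEuclideanLin w)).le_of_opNorm_le hw _
      _ = ‖toEuclideanLin t v‖ := one_mul _

lemma posSemidef_fromBlocks_one_of_norm_le_one [DecidableEq κ] {z : Matrix κ l 𝕜} (hz : ‖z‖ ≤ 1) :
    (fromBlocks 1 z zᴴ 1).PosSemidef := by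
  have : Invertible (1 : Matrix κ κ 𝕜) := invertibleOne
  rw [PosDef.fromBlocks₁₁ z 1 PosDef.one, inv_one, Matrix.mul_one, ← Matrix.le_iff]
  simpa only [conjTranspose_one, Matrix.one_mul] using
    conjTranspose_mul_self_le_iff_exists_contraction.2 ⟨z, hz, (Matrix.mul_one z).symm⟩

lemma posSemidef_fromBlocks_iff_exists_contraction [Finite ι] [Finite ι']
    {s : Matrix κ ι 𝕜} {t : Matrix l ι' 𝕜} {x : Matrix ι ι' 𝕜} :
    (fromBlocks (sᴴ * s) x xᴴ (tᴴ * t)).PosSemidef ↔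
      ∃ z : Matrix κ l 𝕜, ‖z‖ ≤ 1 ∧ x = sᴴ * z * t := by
  have := Fintype.ofFinite ι
  have := Fintype.ofFinite ι'
  constructor
  · intro h
    -- The two column blocks of a square root have Gram matrices `sᴴ * s` and `tᴴ * t`.
    obtain ⟨r, hr⟩ := CStarAlgebra.nonneg_iff_eq_star_mul_self.1 h.nonneg
    rw [← r.fromCols_toCols, star_eq_conjTranspose,
      conjTranspose_fromCols_eq_fromRows_conjTranspose, fromRows_mul_fromCols, fromBlocks_inj] at hr
    obtain ⟨hs, hx, -, ht⟩ := hr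
    obtain ⟨w₁, hw₁, h₁⟩ := conjTranspose_mul_self_le_iff_exists_contraction.1 hs.ge
    obtain ⟨w₂, hw₂, h₂⟩ := conjTranspose_mul_self_le_iff_exists_contraction.1 ht.ge
    refine ⟨w₁ᴴ * w₂, (l2_opNorm_mul _ _).trans ?_, ?_⟩
    · rw [l2_opNorm_conjTranspose]
      exact mul_le_one₀ hw₁ (norm_nonneg _) hw₂
    · rw [hx, h₁, h₂, conjTranspose_mul]
      simp only [Matrix.mul_assoc]
  · rintro ⟨z, hz, rfl⟩
    have h := (posSemidef_fromBlocks_one_of_norm_le_one hz).conjTranspose_mul_mul_same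
      (fromBlocks s 0 0 t)
    simpa [fromBlocks_conjTranspose, fromBlocks_multiply, Matrix.mul_assoc] using h

end Factorization

section Amplification

open scoped Matrix.Norms.L2Operator

variable {N m n : ℕ}

lemma amp_smul (u : Matrix (Fin N) (Fin N) ℂ →ₗ[ℂ] Matrix (Fin m) (Fin m) ℂ) (c : ℂ)
    (x : Matrix (Fin N × Fin n) (Fin N × Fin n) ℂ) : amp u (c • x) = c • amp u x := by
  ext i j
  exact congrFun₂ (u.map_smul c (Matrix.of fun k l => x (k, i.2) (l, j.2))) i.1 j.1

lemma amp_zero (u : Matrix (Fin N) (Fin N) ℂ →ₗ[ℂ] Matrix (Fin m) (Fin m) ℂ) :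
    amp u (0 : Matrix (Fin N × Fin n) (Fin N × Fin n) ℂ) = 0 := by
  simpa only [zero_smul] using amp_smul u 0 0

lemma amp_kronecker (u : Matrix (Fin N) (Fin N) ℂ →ₗ[ℂ] Matrix (Fin m) (Fin m) ℂ)
    (a : Matrix (Fin N) (Fin N) ℂ) (c : Matrix (Fin n) (Fin n) ℂ) :
    amp u (a ⊗ₖ c) = u a ⊗ₖ c := by
  ext i j
  have hblock : (Matrix.of fun k l => (a ⊗ₖ c) (k, i.2) (l, j.2)) = c i.2 j.2 • a := by
    ext k l
    exact mul_comm _ _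
  change u (Matrix.of fun k l => (a ⊗ₖ c) (k, i.2) (l, j.2)) i.1 j.1 = u a i.1 j.1 * c i.2 j.2
  rw [hblock, map_smul, Matrix.smul_apply, smul_eq_mul, mul_comm]

namespace CompletelyPositive

variable {u : Matrix (Fin N) (Fin N) ℂ → Matrix (Fin m) (Fin m) ℂ}

lemma posSemidef_comp_map (hu : CompletelyPositive u) {κ : Type*} [Finite κ]
    {x : Matrix κ κ (Matrix (Fin N) (Fin N) ℂ)}
    (hx : (Matrix.comp κ κ (Fin N) (Fin N) ℂ x).PosSemidef) :
    (Matrix.comp κ κ (Fin m) (Fin m) ℂ (x.map u)).PosSemidef := by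
  obtain ⟨k, ⟨e⟩⟩ := Finite.exists_equiv_fin κ
  have h := (hu k _ (hx.submatrix (Prod.map e.symm id))).submatrix (Prod.map e id)
  convert h using 1
  ext i j
  simp only [ampLeft, submatrix_apply, of_apply, comp_apply, map_apply, Prod.map_fst, Prod.map_snd,
    Equiv.symm_apply_apply, Prod.map_apply, id_eq]
  rfl

lemma posSemidef_apply (hu : CompletelyPositive u) {a : Matrix (Fin N) (Fin N) ℂ}
    (ha : a.PosSemidef) : (u a).PosSemidef :=
  (hu.posSemidef_comp_map (x := Matrix.of fun (_ _ : Unit) => a)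
    (ha.submatrix Prod.snd)).submatrix fun i => ((), i)

lemma posSemidef_fromBlocks_amp (hu : CompletelyPositive u)
    {a b c d : Matrix (Fin N × Fin n) (Fin N × Fin n) ℂ} (h : (fromBlocks a b c d).PosSemidef) :
    (fromBlocks (amp u a) (amp u b) (amp u c) (amp u d)).PosSemidef := by
  -- Regroup the matrix as a `2n × 2n` matrix with entries in `M_N`.
  let index (k : Fin n ⊕ Fin n) (i : Fin N) : Fin N × Fin n ⊕ Fin N × Fin n :=
    Sum.map (Prod.mk i) (Prod.mk i) k
  let blocks : Matrix (Fin n ⊕ Fin n) (Fin n ⊕ Fin n) (Matrix (Fin N) (Fin N) ℂ) :=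
    Matrix.of fun k l => Matrix.of fun i j => fromBlocks a b c d (index k i) (index l j)
  have hblocks : (Matrix.comp _ _ _ _ ℂ blocks).PosSemidef :=
    h.submatrix fun k : (Fin n ⊕ Fin n) × Fin N => index k.1 k.2
  convert (hu.posSemidef_comp_map hblocks).submatrix
    (Sum.elim (fun i : Fin m × Fin n => (Sum.inl i.2, i.1))
      fun i : Fin m × Fin n => (Sum.inr i.2, i.1)) using 1
  ext (i | i) (j | j) <;> rfl

variable {u : Matrix (Fin N) (Fin N) ℂ →ₗ[ℂ] Matrix (Fin m) (Fin m) ℂ}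
  {a b : Matrix (Fin N) (Fin N) ℂ} {s t : Matrix (Fin m) (Fin m) ℂ}

lemma exists_amp_eq_of_norm_le_one (hu : CompletelyPositive u) (hs : u (a * aᴴ) = sᴴ * s)
    (ht : u (bᴴ * b) = tᴴ * t) {y : Matrix (Fin N × Fin n) (Fin N × Fin n) ℂ} (hy : ‖y‖ ≤ 1) :
    ∃ z : Matrix (Fin m × Fin n) (Fin m × Fin n) ℂ, ‖z‖ ≤ 1 ∧
      amp u ((a ⊗ₖ (1 : Matrix (Fin n) (Fin n) ℂ)) * y * (b ⊗ₖ (1 : Matrix (Fin n) (Fin n) ℂ))) =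
        (sᴴ ⊗ₖ (1 : Matrix (Fin n) (Fin n) ℂ)) * z * (t ⊗ₖ (1 : Matrix (Fin n) (Fin n) ℂ)) := by
  have hgram {k : ℕ} (r : Matrix (Fin k) (Fin k) ℂ) :
      (r ⊗ₖ (1 : Matrix (Fin n) (Fin n) ℂ))ᴴ * (r ⊗ₖ (1 : Matrix (Fin n) (Fin n) ℂ)) =
        (rᴴ * r) ⊗ₖ (1 : Matrix (Fin n) (Fin n) ℂ) := by
    rw [conjTranspose_kronecker, conjTranspose_one, ← mul_kronecker_mul, Matrix.one_mul]
  have hadj {k : ℕ} (r : Matrix (Fin k) (Fin k) ℂ) :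
      (rᴴ ⊗ₖ (1 : Matrix (Fin n) (Fin n) ℂ)) = (r ⊗ₖ (1 : Matrix (Fin n) (Fin n) ℂ))ᴴ := by
    rw [conjTranspose_kronecker, conjTranspose_one]
  have hpos := hu.posSemidef_fromBlocks_amp
    (posSemidef_fromBlocks_iff_exists_contraction.2 ⟨y, hy, rfl⟩ :
      (fromBlocks ((aᴴ ⊗ₖ (1 : Matrix (Fin n) (Fin n) ℂ))ᴴ * (aᴴ ⊗ₖ 1)) _ _
        ((b ⊗ₖ (1 : Matrix (Fin n) (Fin n) ℂ))ᴴ * (b ⊗ₖ 1))).PosSemidef)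
  rw [← (isHermitian_fromBlocks_iff.1 hpos.isHermitian).2.1, hgram, hgram, amp_kronecker,
    amp_kronecker, conjTranspose_conjTranspose, hs, ht, ← hgram, ← hgram,
    posSemidef_fromBlocks_iff_exists_contraction] at hpos
  simpa only [hadj, conjTranspose_conjTranspose] using hpos

lemma exists_amp_eq (hu : CompletelyPositive u) (hs : u (a * aᴴ) = sᴴ * s)
    (ht : u (bᴴ * b) = tᴴ * t) (y : Matrix (Fin N × Fin n) (Fin N × Fin n) ℂ) :
    ∃ z : Matrix (Fin m × Fin n) (Fin m × Fin n) ℂ, ‖z‖ ≤ ‖y‖ ∧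
      amp u ((a ⊗ₖ (1 : Matrix (Fin n) (Fin n) ℂ)) * y * (b ⊗ₖ (1 : Matrix (Fin n) (Fin n) ℂ))) =
        (sᴴ ⊗ₖ (1 : Matrix (Fin n) (Fin n) ℂ)) * z * (t ⊗ₖ (1 : Matrix (Fin n) (Fin n) ℂ)) := by
  obtain ⟨y', hy', hyy'⟩ : ∃ y', ‖y'‖ ≤ 1 ∧ y = (‖y‖ : ℂ) • y' := by
    rcases eq_or_ne y 0 with rfl | hy
    · exact ⟨0, norm_zero.trans_le zero_le_one, (smul_zero _).symm⟩
    · exact ⟨(‖y‖ : ℂ)⁻¹ • y, (norm_smul_inv_norm hy).le,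
        (smul_inv_smul₀ (Complex.ofReal_ne_zero.2 (norm_ne_zero_iff.2 hy)) y).symm⟩
  obtain ⟨z, hz, hzu⟩ := hu.exists_amp_eq_of_norm_le_one hs ht hy'
  refine ⟨(‖y‖ : ℂ) • z, ?_, ?_⟩
  · rw [norm_smul, Complex.norm_real, norm_norm]
    exact mul_le_of_le_one_right (norm_nonneg y) hz
  · rw [hyy', Matrix.mul_smul, Matrix.smul_mul, amp_smul, hzu, Matrix.mul_smul, Matrix.smul_mul,
      ← hyy']

end CompletelyPositive

end Amplification

section PisierNorm

open scoped Matrix.Norms.L2Operator MatrixOrder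

variable {N m n : ℕ} {p : ℝ≥0∞} {C : ℝ} {x : Matrix (Fin N × Fin n) (Fin N × Fin n) ℂ}

lemma schattenNorm_mul_opNorm_mul_schattenNorm_nonneg (p : ℝ≥0∞) (a b : Matrix (Fin N) (Fin N) ℂ)
    (y : Matrix (Fin N × Fin n) (Fin N × Fin n) ℂ) :
    0 ≤ schattenNorm (2 * p) a * opNorm y * schattenNorm (2 * p) b :=
  mul_nonneg (mul_nonneg (schattenNorm_nonneg _ a) (norm_nonneg _)) (schattenNorm_nonneg _ b)

lemma pisierNorm_nonneg (p : ℝ≥0∞) (x : Matrix (Fin N × Fin n) (Fin N × Fin n) ℂ) :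
    0 ≤ pisierNorm p x := by
  refine Real.sInf_nonneg ?_
  rintro _ ⟨a, b, y, -, rfl⟩
  exact schattenNorm_mul_opNorm_mul_schattenNorm_nonneg p a b y

lemma pisierNorm_mul_le (p : ℝ≥0∞) (a b : Matrix (Fin N) (Fin N) ℂ)
    (y : Matrix (Fin N × Fin n) (Fin N × Fin n) ℂ) :
    pisierNorm p
        ((a ⊗ₖ (1 : Matrix (Fin n) (Fin n) ℂ)) * y * (b ⊗ₖ (1 : Matrix (Fin n) (Fin n) ℂ))) ≤
      schattenNorm (2 * p) a * opNorm y * schattenNorm (2 * p) b := by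
  refine csInf_le ⟨0, ?_⟩ ⟨a, b, y, rfl, rfl⟩
  rintro _ ⟨a, b, y, -, rfl⟩
  exact schattenNorm_mul_opNorm_mul_schattenNorm_nonneg p a b y

lemma pisierNorm_zero (p : ℝ≥0∞) :
    pisierNorm p (0 : Matrix (Fin N × Fin n) (Fin N × Fin n) ℂ) = 0 := by
  refine le_antisymm ?_ (pisierNorm_nonneg p 0)
  have h := pisierNorm_mul_le p (1 : Matrix (Fin N) (Fin N) ℂ) 1
    (0 : Matrix (Fin N × Fin n) (Fin N × Fin n) ℂ)
  rwa [Matrix.mul_zero, Matrix.zero_mul, opNorm_eq_norm, norm_zero, mul_zero, zero_mul] at h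

lemma le_mul_pisierNorm {r : ℝ} (hC : 0 ≤ C)
    (h : ∀ (a b : Matrix (Fin N) (Fin N) ℂ) (y : Matrix (Fin N × Fin n) (Fin N × Fin n) ℂ),
      x = (a ⊗ₖ (1 : Matrix (Fin n) (Fin n) ℂ)) * y * (b ⊗ₖ (1 : Matrix (Fin n) (Fin n) ℂ)) →
        r ≤ C * (schattenNorm (2 * p) a * opNorm y * schattenNorm (2 * p) b)) :
    r ≤ C * pisierNorm p x := by
  rw [pisierNorm, ← smul_eq_mul C, ← Real.sInf_smul_of_nonneg hC]
  refine le_csInf (Set.Nonempty.smul_set ⟨_, 1, 1, x, ?_, rfl⟩) ?_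
  · rw [one_kronecker_one, Matrix.one_mul, Matrix.mul_one]
  · rintro _ ⟨_, ⟨a, b, y, hx, rfl⟩, rfl⟩
    exact h a b y hx

namespace CompletelyPositive

variable {u : Matrix (Fin N) (Fin N) ℂ →ₗ[ℂ] Matrix (Fin m) (Fin m) ℂ}

lemma exists_apply_eq_conjTranspose_mul_self (hu : CompletelyPositive u)
    (hb : ∀ x : Matrix (Fin N) (Fin N) ℂ, x.PosSemidef →
      schattenNorm p (u x) ≤ C * schattenNorm p x) (a : Matrix (Fin N) (Fin N) ℂ) :
    ∃ s, u (aᴴ * a) = sᴴ * s ∧ schattenNorm (2 * p) s ≤ √C * schattenNorm (2 * p) a := by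
  have ha := posSemidef_conjTranspose_mul_self a
  obtain ⟨s, hs⟩ := CStarAlgebra.nonneg_iff_eq_star_mul_self.1 (hu.posSemidef_apply ha).nonneg
  rw [star_eq_conjTranspose] at hs
  have hsq := hb _ ha
  rw [hs, schattenNorm_conjTranspose_mul_self, schattenNorm_conjTranspose_mul_self] at hsq
  refine ⟨s, hs, (Real.le_sqrt_of_sq_le hsq).trans_eq ?_⟩
  rw [Real.sqrt_mul' _ (sq_nonneg _), Real.sqrt_sq (schattenNorm_nonneg _ a)]

lemma pisierNorm_amp_mul_le (hu : CompletelyPositive u) (hC : 0 ≤ C)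
    (hb : ∀ x : Matrix (Fin N) (Fin N) ℂ, x.PosSemidef →
      schattenNorm p (u x) ≤ C * schattenNorm p x) (a b : Matrix (Fin N) (Fin N) ℂ)
    (y : Matrix (Fin N × Fin n) (Fin N × Fin n) ℂ) :
    pisierNorm p (amp u
        ((a ⊗ₖ (1 : Matrix (Fin n) (Fin n) ℂ)) * y * (b ⊗ₖ (1 : Matrix (Fin n) (Fin n) ℂ)))) ≤
      C * (schattenNorm (2 * p) a * opNorm y * schattenNorm (2 * p) b) := by
  obtain ⟨s, hs, hsa⟩ := hu.exists_apply_eq_conjTranspose_mul_self hb aᴴ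
  obtain ⟨t, ht, htb⟩ := hu.exists_apply_eq_conjTranspose_mul_self hb b
  rw [conjTranspose_conjTranspose] at hs
  obtain ⟨z, hz, hamp⟩ := hu.exists_amp_eq hs ht y
  rw [hamp]
  calc _ ≤ schattenNorm (2 * p) sᴴ * ‖z‖ * schattenNorm (2 * p) t := pisierNorm_mul_le p sᴴ t z
    _ ≤ (√C * schattenNorm (2 * p) a) * ‖y‖ * (√C * schattenNorm (2 * p) b) := by
      rw [schattenNorm_conjTranspose] at hsa ⊢
      have := schattenNorm_nonneg (2 * p) a
      have := schattenNorm_nonneg (2 * p) t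
      gcongr
    _ = √C ^ 2 * (schattenNorm (2 * p) a * ‖y‖ * schattenNorm (2 * p) b) := by ring
    _ = C * (schattenNorm (2 * p) a * ‖y‖ * schattenNorm (2 * p) b) := by rw [Real.sq_sqrt hC]

end CompletelyPositive

end PisierNorm

theorem regular_norm_le_of_completelyPositive_general {N m n : ℕ} {p : ℝ≥0∞} (hp : p ≠ 0) {C : ℝ}
    {u : Matrix (Fin N) (Fin N) ℂ →ₗ[ℂ] Matrix (Fin m) (Fin m) ℂ} (hcp : CompletelyPositive u)
    (hb : ∀ x : Matrix (Fin N) (Fin N) ℂ, x.PosSemidef →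
      schattenNorm p (u x) ≤ C * schattenNorm p x)
    (x : Matrix (Fin N × Fin n) (Fin N × Fin n) ℂ) :
    pisierNorm p (amp u x) ≤ C * pisierNorm p x := by
  rcases isEmpty_or_nonempty (Fin N) with hN | hN
  · rw [Subsingleton.elim x 0, amp_zero, pisierNorm_zero, pisierNorm_zero, mul_zero]
  have hone : 0 < schattenNorm p (1 : Matrix (Fin N) (Fin N) ℂ) :=
    (schattenNorm_nonneg p 1).lt_of_ne' ((schattenNorm_eq_zero hp).not.2 one_ne_zero)
  have hC : 0 ≤ C :=
    nonneg_of_mul_nonneg_left ((schattenNorm_nonneg p _).trans (hb 1 PosSemidef.one)) hone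
  refine le_mul_pisierNorm hC ?_
  rintro a b y rfl
  exact hcp.pisierNorm_amp_mul_le hC hb a b y

/-- Matrix-algebra case of the first part of Lemma 2.3: a completely positive map that is
bounded on `S_p` with constant `C` has regular norm at most `C`. -/
theorem regular_norm_le_of_completelyPositive {N : ℕ} (p : ℝ≥0∞) (hp : 1 ≤ p) (hptop : p ≠ ∞)
    (C : ℝ) (u : Matrix (Fin N) (Fin N) ℂ →ₗ[ℂ] Matrix (Fin N) (Fin N) ℂ)
    (hcp : CompletelyPositive (⇑u))
    (hb : ∀ x : Matrix (Fin N) (Fin N) ℂ, schattenNorm p (u x) ≤ C * schattenNorm p x) :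
    ∀ n : ℕ, 1 ≤ n → ∀ x : Matrix (Fin N × Fin n) (Fin N × Fin n) ℂ,
      pisierNorm p (amp (⇑u) x) ≤ C * pisierNorm p x :=
  fun _ _ => regular_norm_le_of_completelyPositive_general (zero_lt_one.trans_le hp).ne' hcp
    fun x _ => hb x
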